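/- Let q be a prime power, r ≥ 2, and let k ≥ 1 with k < q^{2r-1}. Let g ∈ F_{q^r}[x] be a polynomial of degree k having k distinct roots, all lying in F_{q^r}. Then the codeword ev(g(x)) of C_{q,r,k} is minimal: for every b ∈ F_{q^r} and every f ∈ F_{q^r}[x] of degree at most k, if the support of ev(b·y − f(x)) is contained in the support of ev(g(x)), then ev(b·y − f(x)) is a scalar multiple of ev(g(x)). -/

import Mathlib

/-!
Fix a subfield `K` of order `q`, so that the curve reads `norm x = trace y` for `F` over `K`. The
trace is onto `K` with a nontrivial kernel, hence every vertical line meets the curve in at least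
two points. Over a root `a` of `g` the word `b * y - f a` vanishes at all of them, which forces
`b = 0` and `f a = 0`. Thus `g ∣ f`, and the degree bound makes the quotient a constant.
-/

open Module Polynomial

section Polynomial

variable {K : Type*} [Field K] {f g : K[X]}

lemma card_toFinset_roots_eq_natDegree_iff [DecidableEq K] (hg : g ≠ 0) :
    g.roots.toFinset.card = g.natDegree ↔ g.Splits ∧ g.Separable := by
  constructor
  · intro h
    have hsplits : g.Splits := splits_iff_card_roots.2 <|
      (card_roots' g).antisymm (h ▸ Multiset.toFinset_card_le g.roots)
    refine ⟨hsplits, (nodup_roots_iff_of_splits hg hsplits).1 ?_⟩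
    rw [← Multiset.toFinset_card_eq_card_iff_nodup, h, hsplits.natDegree_eq_card_roots]
  · rintro ⟨hsplits, hsep⟩
    rw [Multiset.toFinset_card_of_nodup (nodup_roots hsep), hsplits.natDegree_eq_card_roots]

lemma dvd_of_forall_isRoot (hsplits : g.Splits) (hsep : g.Separable)
    (h : ∀ a, g.IsRoot a → f.IsRoot a) : g ∣ f := by
  obtain rfl | hf := eq_or_ne f 0
  · exact dvd_zero g
  refine hsplits.dvd_of_roots_le_roots hsep.ne_zero ?_
  rw [Multiset.le_iff_subset (nodup_roots hsep)]
  exact fun a ha ↦ (mem_roots hf).2 (h a (isRoot_of_mem_roots ha))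

lemma exists_eq_C_mul_of_dvd_of_natDegree_le (hdvd : g ∣ f) (hdeg : f.natDegree ≤ g.natDegree) :
    ∃ c, f = C c * g := by
  obtain rfl | hf := eq_or_ne f 0
  · exact ⟨0, by simp⟩
  obtain ⟨u, rfl⟩ := associated_of_dvd_of_natDegree_le hdvd hf hdeg
  obtain ⟨c, -, hc⟩ := Polynomial.isUnit_iff.1 u.isUnit
  exact ⟨c, by rw [hc, mul_comm]⟩

end Polynomial

lemma eq_zero_of_forall_mul_sub_eq_zero {R : Type*} [Ring R] [NoZeroDivisors R] {s : Set R}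
    (hs : s.Nontrivial) {b c : R} (h : ∀ y ∈ s, b * y - c = 0) : b = 0 ∧ c = 0 := by
  obtain ⟨y, hy, z, hz, hyz⟩ := hs
  have hb : b = 0 := by
    have hmul : b * (y - z) = 0 := by
      rw [mul_sub, sub_eq_zero.1 (h y hy), sub_eq_zero.1 (h z hz), sub_self]
    exact (mul_eq_zero.1 hmul).resolve_right (sub_ne_zero.2 hyz)
  exact ⟨hb, by simpa [hb] using h y hy⟩

lemma nontrivial_trace_preimage_singleton {K L : Type*} [Field K] [Field L] [Algebra K L]
    [Algebra.IsSeparable K L] (hKL : 1 < finrank K L) (c : K) :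
    (Algebra.trace K L ⁻¹' {c}).Nontrivial := by
  have : FiniteDimensional K L := .of_finrank_pos (by lia)
  obtain ⟨y, hy⟩ := Algebra.trace_surjective K L c
  obtain ⟨t, ht, ht0⟩ := (Submodule.ne_bot_iff _).1 <|
    LinearMap.ker_ne_bot_of_finrank_lt (f := Algebra.trace K L) (by rwa [finrank_self])
  refine ⟨y, hy, y + t, ?_, by simpa using ht0⟩
  simp [hy, LinearMap.mem_ker.1 ht]

lemma exists_subfield_natCard_eq_and_finrank_eq {F : Type*} [Field F] [Finite F] {q r : ℕ}
    (hF : Nat.card F = q ^ r) : ∃ K : Subfield F, Nat.card K = q ∧ finrank K F = r := by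
  have hcard : 1 < q ^ r := hF ▸ Finite.one_lt_card
  have hr : r ≠ 0 := by rintro rfl; simp at hcard
  obtain ⟨p, hchar⟩ := CharP.exists F
  have : Fact p.Prime := ⟨CharP.char_is_prime F p⟩
  let : Algebra (ZMod p) F := ZMod.algebra F p
  have hpn : p ^ finrank (ZMod p) F = q ^ r := by rw [FiniteField.pow_finrank_eq_natCard, hF]
  obtain ⟨m, -, rfl⟩ := (Nat.dvd_prime_pow Fact.out).1 (hpn ▸ dvd_pow_self q hr)
  have hm : m ≠ 0 := by rintro rfl; simp at hcard
  have hdvd : finrank (ZMod p) (GaloisField p m) ∣ finrank (ZMod p) F := by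
    rw [GaloisField.finrank p hm]
    exact ⟨r, Nat.pow_right_injective (Fact.out : p.Prime).two_le (by simpa [pow_mul] using hpn)⟩
  obtain ⟨φ⟩ := FiniteField.nonempty_algHom_of_finrank_dvd hdvd
  let K : Subfield F := φ.toRingHom.fieldRange
  have hK : Nat.card K = p ^ m :=
    (Nat.card_range_of_injective φ.injective).trans (GaloisField.card p m hm)
  have hq : 1 < p ^ m := (Nat.one_lt_pow_iff hr).1 hcard
  refine ⟨K, hK, Nat.pow_right_injective hq ?_⟩
  calc (p ^ m) ^ finrank K F = Nat.card F := by rw [← hK, ← Module.natCard_eq_pow_finrank]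
    _ = (p ^ m) ^ r := hF

lemma norm_eq_trace_iff_pow_eq_sum_pow (K : Type*) {L : Type*} [Field K] [Field L] [Finite L]
    [Algebra K L] (x y : L) :
    Algebra.norm K x = Algebra.trace K L y ↔
      x ^ ((Nat.card L - 1) / (Nat.card K - 1)) =
        ∑ i ∈ Finset.range (finrank K L), y ^ Nat.card K ^ i := by
  rw [← (algebraMap K L).injective.eq_iff, FiniteField.algebraMap_norm_eq_pow,
    FiniteField.algebraMap_trace_eq_sum_pow]

theorem stmt_15_general {K L : Type*} [Field K] [Field L] [Algebra K L] [Algebra.IsSeparable K L]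
    (hKL : 1 < finrank K L) {g : L[X]} (hg : 0 < g.natDegree) (hsplits : g.Splits)
    (hsep : g.Separable) (b : L) (f : L[X]) (hf : f.natDegree ≤ g.natDegree)
    (hsupp : ∀ x y : L, Algebra.norm K x = Algebra.trace K L y →
      b * y - f.eval x ≠ 0 → g.eval x ≠ 0) :
    ∃ l : L, ∀ x y : L, Algebra.norm K x = Algebra.trace K L y →
      b * y - f.eval x = l * g.eval x := by
  have hvanish : ∀ a, g.IsRoot a → b = 0 ∧ f.IsRoot a := fun a ha ↦
    eq_zero_of_forall_mul_sub_eq_zero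
      (nontrivial_trace_preimage_singleton hKL (Algebra.norm K a))
      fun y hy ↦ of_not_not fun hne ↦ hsupp a y hy.symm hne ha
  obtain ⟨a, ha⟩ := hsplits.exists_eval_eq_zero (natDegree_pos_iff_degree_pos.1 hg).ne'
  have hb : b = 0 := (hvanish a ha).1
  have hdvd : g ∣ f := dvd_of_forall_isRoot hsplits hsep fun x hx ↦ (hvanish x hx).2
  obtain ⟨c, rfl⟩ := exists_eq_C_mul_of_dvd_of_natDegree_le hdvd hf
  exact ⟨-c, fun x y _ ↦ by simp [hb]⟩

/-- If `g ∈ F_{q^r}[x]` has degree `k` with `k` distinct roots all in `F_{q^r}`, then the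
codeword `ev(g(x))` of `C_{q,r,k}` is minimal: every codeword `ev(b·y − f(x))` whose
support is contained in the support of `ev(g(x))` is a scalar multiple of `ev(g(x))`. -/
theorem stmt_15 (p m r k : ℕ) (hp : p.Prime) (hm : 0 < m) (hr : 2 ≤ r)
    (q : ℕ) (hq : q = p ^ m) (hk1 : 1 ≤ k) (hk2 : k < q ^ (2 * r - 1))
    (F : Type) [Field F] [Fintype F] [DecidableEq F] (hF : Fintype.card F = q ^ r)
    (g : Polynomial F) (hgdeg : g.natDegree = k) (hroots : g.roots.toFinset.card = k) :
    ∀ (b : F) (f : Polynomial F), f.natDegree ≤ k →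
      (∀ x y : F, x ^ ((q ^ r - 1) / (q - 1)) = ∑ i ∈ Finset.range r, y ^ q ^ i →
        b * y - f.eval x ≠ 0 → g.eval x ≠ 0) →
      ∃ l : F, ∀ x y : F, x ^ ((q ^ r - 1) / (q - 1)) = ∑ i ∈ Finset.range r, y ^ q ^ i →
        b * y - f.eval x = l * g.eval x := by
  rw [← Nat.card_eq_fintype_card] at hF
  obtain ⟨K, hK, hKF⟩ := exists_subfield_natCard_eq_and_finrank_eq hF
  have hg : 0 < g.natDegree := hgdeg ▸ hk1
  obtain ⟨hsplits, hsep⟩ := (card_toFinset_roots_eq_natDegree_iff (ne_zero_of_natDegree_gt hg)).1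
    (hroots.trans hgdeg.symm)
  simpa only [norm_eq_trace_iff_pow_eq_sum_pow, hF, hK, hKF, hgdeg] using
    stmt_15_general (K := K) (by lia) hg hsplits hsep
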